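/- (Dual invariance) Let λ and μ be dominant integral weights (⟨ν,α^∨⟩ ∈ ℤ_{≥0} for all α ∈ Δ) with Φ_λ = Φ_J and Φ_μ = Φ_I for subsets I, J ⊆ Δ. Then for all x, y ∈ ᴵWᴶ (so that xλ, yλ ∈ Λ_I⁺ and x^{−1}μ, y^{−1}μ ∈ Λ_J⁺): c̃(xλ, yλ, Φ_I, Φ) = (−1)^{ℓ(x)+ℓ(y)+1} c̃(x^{−1}μ, y^{−1}μ, Φ_J, Φ). -/

import Mathlib

open scoped RealInnerProductSpace
open Classical

noncomputable section

namespace JantzenGVM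

variable {V : Type*} [NormedAddCommGroup V] [InnerProductSpace ℝ V] [FiniteDimensional ℝ V]

/-- The coroot `α^∨ = 2α/⟨α,α⟩` of a vector `α` (junk value `0` when `α = 0`). -/
def coroot (α : V) : V := (2 / ⟪α, α⟫) • α

/-- The linear functional `v ↦ ⟨v, α^∨⟩`. -/
def corootForm (α : V) : V →ₗ[ℝ] ℝ where
  toFun v := ⟪v, coroot α⟫
  map_add' x y := by simp [inner_add_left]
  map_smul' c x := by simp [inner_smul_left]

lemma corootForm_self {α : V} (h : ⟪α, α⟫ ≠ 0) : corootForm α α = 2 := by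
  simp only [corootForm, coroot, LinearMap.coe_mk, AddHom.coe_mk, real_inner_smul_right]
  field_simp

/-- The reflection `s_α` as a linear automorphism of `V` (the identity when `⟨α,α⟩ = 0`). -/
def reflV (α : V) : V ≃ₗ[ℝ] V :=
  if h : ⟪α, α⟫ = 0 then LinearEquiv.refl ℝ V
  else Module.reflection (corootForm_self h)

/-- `h* = ℂ ⊗ V`, realized as the space of real-linear functionals `V → ℂ` via the
inner product; an element `λ` pairs with a root `α` by `⟨λ, α⟩ = λ α` and with the
coroot by `⟨λ, α^∨⟩ = λ (coroot α)`. -/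
abbrev HStar (V : Type*) [NormedAddCommGroup V] [InnerProductSpace ℝ V] := V →ₗ[ℝ] ℂ

/-- The canonical embedding of `V` into `h*`. -/
def emb (α : V) : HStar V where
  toFun v := (⟪α, v⟫ : ℂ)
  map_add' x y := by simp [inner_add_right]
  map_smul' c x := by simp [inner_smul_right, Complex.real_smul]

/-- The action of a linear automorphism `w` of `V` on `h*`: `(w • λ)(v) = λ(w⁻¹ v)`. -/
def wAct (w : V ≃ₗ[ℝ] V) (l : HStar V) : HStar V := l ∘ₗ (w.symm : V →ₗ[ℝ] V)

/-- The reflection `s_β λ = λ - ⟨λ, β^∨⟩ β` acting on `h*`. -/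
def sRefl (β : V) (l : HStar V) : HStar V := l - l (coroot β) • emb β

/-- The group generated by the reflections in the elements of `Φ'`. -/
def weyl (Φ' : Set V) : Subgroup (V ≃ₗ[ℝ] V) :=
  Subgroup.closure {w | ∃ α ∈ Φ', w = reflV α}

/-- A finite, reduced, crystallographic root system spanning the Euclidean space `V`,
together with a choice of positive system and the corresponding simple system. -/
structure RootSys (V : Type*) [NormedAddCommGroup V] [InnerProductSpace ℝ V]
    [FiniteDimensional ℝ V] where
  Φ : Finset V
  pos : Finset V
  Δ : Finset V
  ne_zero : ∀ α ∈ Φ, α ≠ (0 : V)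
  span_eq_top : Submodule.span ℝ (Φ : Set V) = ⊤
  reduced : ∀ α ∈ Φ, ∀ c : ℝ, c • α ∈ Φ → c = 1 ∨ c = -1
  refl_mem : ∀ α ∈ Φ, ∀ β ∈ Φ, reflV α β ∈ Φ
  crystallographic : ∀ α ∈ Φ, ∀ β ∈ Φ, ∃ n : ℤ, ⟪β, coroot α⟫ = (n : ℝ)
  pos_subset : pos ⊆ Φ
  mem_pos_or : ∀ α ∈ Φ, α ∈ pos ∨ -α ∈ pos
  not_both : ∀ α ∈ pos, -α ∉ pos
  simple_subset : Δ ⊆ pos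
  simple_indep : LinearIndependent ℝ (fun x : {a : V // a ∈ Δ} => x.1)
  simple_gen : ∀ β ∈ pos, ∃ c : V → ℝ, (∀ α ∈ Δ, 0 ≤ c α) ∧ β = ∑ α ∈ Δ, c α • α

/-- A subsystem of the root system: a subset of `Φ` closed under its own reflections. -/
def IsSubsystem (S : RootSys V) (Φ' : Set V) : Prop :=
  Φ' ⊆ (S.Φ : Set V) ∧ ∀ α ∈ Φ', ∀ β ∈ Φ', reflV α β ∈ Φ'

/-- The length of `w`, i.e. the number of positive roots sent to negative roots
(this equals the Coxeter length for elements of the Weyl group). -/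
def len (S : RootSys V) (w : V ≃ₗ[ℝ] V) : ℕ :=
  {β ∈ (S.pos : Set V) | w β ∉ (S.pos : Set V)}.ncard

/-- `Φ_I = ℤI ∩ Φ`, the subsystem generated by a subset `I` of the simple roots. -/
def PhiI (S : RootSys V) (I : Finset V) : Set V :=
  {α ∈ (S.Φ : Set V) | α ∈ Submodule.span ℤ (I : Set V)}

/-- `z` is a positive integer. -/
def IsPosInt (z : ℂ) : Prop := ∃ n : ℤ, 0 < n ∧ z = (n : ℂ)

/-- `z` is an integer. -/
def IsInt (z : ℂ) : Prop := ∃ n : ℤ, z = (n : ℂ)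

/-- `Λ_I⁺ = {λ ∈ h* : ⟨λ, α^∨⟩ ∈ ℤ_{>0} for all α ∈ I}`. -/
def LambdaP (I : Set V) : Set (HStar V) :=
  {l | ∀ α ∈ I, IsPosInt (l (coroot α))}

/-- `Λ⁺(Φ'', Φ') = {ν ∈ ℂΦ' : ⟨ν, α^∨⟩ ∈ ℤ_{>0} for all α ∈ Φ'' ∩ Φ⁺}`. -/
def LambdaPSub (S : RootSys V) (Φ'' Φ' : Set V) : Set (HStar V) :=
  {l | l ∈ Submodule.span ℂ (emb '' Φ') ∧
       ∀ α ∈ Φ'' ∩ (S.pos : Set V), IsPosInt (l (coroot α))}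

/-- `λ` is `Φ''`-regular: `⟨λ, α⟩ ≠ 0` for all `α ∈ Φ''`. -/
def IsRegularOn (Φ'' : Set V) (l : HStar V) : Prop := ∀ α ∈ Φ'', l α ≠ 0

/-- `Ψ⁺(λ, Φ'', Φ') = {β ∈ (Φ' ∩ Φ⁺) \ Φ'' : ⟨λ, β^∨⟩ ∈ ℤ_{>0}}`. -/
def PsiP (S : RootSys V) (Φ'' Φ' : Set V) (l : HStar V) : Set V :=
  {β | β ∈ Φ' ∩ (S.pos : Set V) ∧ β ∉ Φ'' ∧ IsPosInt (l (coroot β))}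

/-- `Ψ⁺⁺(λ, Φ'', Φ') = {β ∈ Ψ⁺(λ, Φ'', Φ') : s_β λ is Φ''-regular}`. -/
def PsiPP (S : RootSys V) (Φ'' Φ' : Set V) (l : HStar V) : Set V :=
  {β ∈ PsiP S Φ'' Φ' l | ∀ α ∈ Φ'', (sRefl β l) α ≠ 0}

/-- The sign function: `sgn(λ, μ) = (-1)^{ℓ(w)}` if `λ, μ` are `Φ''`-regular and
`μ = wλ` for some `w ∈ W(Φ'')`, and `0` otherwise. -/
def sgnW (S : RootSys V) (Φ'' : Set V) (l m : HStar V) : ℤ :=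
  if h : IsRegularOn Φ'' l ∧ IsRegularOn Φ'' m ∧ ∃ w, w ∈ weyl Φ'' ∧ m = wAct w l
  then (-1) ^ len S h.2.2.choose else 0

/-- The Jantzen coefficient `c(λ, μ, Φ'', Φ') = Σ_{β ∈ Ψ⁺⁺(λ,Φ'',Φ')} sgn(s_β λ, μ)`. -/
def jc (S : RootSys V) (Φ'' Φ' : Set V) (l m : HStar V) : ℤ :=
  ∑ᶠ β ∈ PsiPP S Φ'' Φ' l, sgnW S Φ'' (sRefl β l) m

/-- The symmetrized Jantzen coefficient `c̃(λ, μ, Φ'', Φ')`. -/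
def jcSym (S : RootSys V) (Φ'' Φ' : Set V) (l m : HStar V) : ℤ :=
  jc S Φ'' Φ' l m + jc S Φ'' Φ' m l

/-- `θ(λ) = Σ_{w ∈ W_I} (-1)^{ℓ(w)} e^{wλ}` in the free `ℤ`-module on `h*`. -/
def theta (S : RootSys V) (I : Finset V) (l : HStar V) : HStar V →₀ ℤ :=
  ∑ᶠ w ∈ (weyl (PhiI S I) : Set (V ≃ₗ[ℝ] V)),
    Finsupp.single (wAct w l) ((-1) ^ len S w)

/-- `Φ_λ = {α ∈ Φ : ⟨λ, α⟩ = 0}`. -/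
def singSet (S : RootSys V) (l : HStar V) : Set V :=
  {α ∈ (S.Φ : Set V) | l α = 0}

/-- `Φ_{[λ]} = {α ∈ Φ : ⟨λ, α^∨⟩ ∈ ℤ}`. -/
def integralSet (S : RootSys V) (l : HStar V) : Set V :=
  {α ∈ (S.Φ : Set V) | IsInt (l (coroot α))}

/-- `(ℚ A) ∩ Φ`, the intersection of the rational span of `A` with `Φ`.
Taking `A = Φ_I ∪ {β}` gives `Φ_{β,1}`; taking `A = Φ_λ ∪ {β}` gives `Φ_{β,2}`. -/
def ratSpanRoots (S : RootSys V) (A : Set V) : Set V :=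
  {γ ∈ (S.Φ : Set V) | ∃ (t : Finset V) (c : V → ℚ),
    (t : Set V) ⊆ A ∧ γ = ∑ α ∈ t, (c α : ℝ) • α}

/-- `Φ_{β,0}`, the irreducible component of `Φ` containing `β`. -/
def component (S : RootSys V) (β : V) : Set V :=
  {γ ∈ (S.Φ : Set V) |
    Relation.ReflTransGen
      (fun x y => x ∈ (S.Φ : Set V) ∧ y ∈ (S.Φ : Set V) ∧ ⟪x, y⟫ ≠ 0) β γ}

/-- `λ|_{Φ'}`: the unique element of `ℂΦ'` with `⟨λ|_{Φ'}, α^∨⟩ = ⟨λ, α^∨⟩`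
for all `α ∈ Φ'`. -/
def restrictW (Φ' : Set V) (l : HStar V) : HStar V :=
  letI : Nonempty (HStar V) := ⟨0⟩
  Classical.epsilon fun m =>
    m ∈ Submodule.span ℂ (emb '' Φ') ∧ ∀ α ∈ Φ', m (coroot α) = l (coroot α)

/-- `ᴵWᴶ = {w ∈ W : ℓ(uwv) = ℓ(u) + ℓ(w) + ℓ(v) for all u ∈ W_I, v ∈ W_J}`. -/
def doubleCoset (S : RootSys V) (I J : Finset V) : Set (V ≃ₗ[ℝ] V) :=
  {w | w ∈ weyl (S.Φ : Set V) ∧ ∀ u ∈ weyl (PhiI S I), ∀ v ∈ weyl (PhiI S J),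
    len S (u * w * v) = len S u + len S w + len S v}

/-- The fundamental weight `ϖ_j` relative to an enumeration `e` of the simple roots:
the unique element of `h*` with `⟨ϖ_j, α_k^∨⟩ = δ_{jk}`. -/
def fundWeight {n : ℕ} (e : Fin n → V) (j : Fin n) : HStar V :=
  letI : Nonempty (HStar V) := ⟨0⟩
  Classical.epsilon fun m => ∀ k : Fin n, m (coroot (e k)) = if k = j then 1 else 0

/-- The labels of the irreducible Dynkin types. -/
inductive LieType | A | B | C | D | E | F | G
deriving DecidableEq

/-- The Cartan matrix of type `A_n` (1-based indices): entry `(i,j)` is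
`⟨α_i, α_j^∨⟩`. -/
def cartanA (i j : ℕ) : ℤ :=
  if i = j then 2 else if i + 1 = j ∨ j + 1 = i then -1 else 0

/-- The Cartan matrices of the irreducible types in the standard (Bourbaki/Humphreys)
numbering of the Dynkin diagram: `cartanEntry t n i j = ⟨α_i, α_j^∨⟩` (1-based). -/
def cartanEntry : LieType → ℕ → ℕ → ℕ → ℤ
  | .A, _, i, j => cartanA i j
  | .B, n, i, j => if i + 1 = n ∧ j = n then -2 else cartanA i j
  | .C, n, i, j => if i = n ∧ j + 1 = n then -2 else cartanA i j
  | .D, n, i, j =>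
      if i = j then 2
      else if (i + 2 = n ∧ j = n) ∨ (i = n ∧ j + 2 = n) then -1
      else if (i + 1 = n ∧ j = n) ∨ (i = n ∧ j + 1 = n) then 0
      else cartanA i j
  | .E, _, i, j =>
      if i = j then 2
      else if (i = 1 ∧ j = 3) ∨ (i = 3 ∧ j = 1) ∨ (i = 2 ∧ j = 4) ∨ (i = 4 ∧ j = 2) then -1
      else if (i = 1 ∧ j = 2) ∨ (i = 2 ∧ j = 1) ∨ (i = 2 ∧ j = 3) ∨ (i = 3 ∧ j = 2) then 0
      else cartanA i j
  | .F, _, i, j => if i = 2 ∧ j = 3 then -2 else cartanA i j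
  | .G, _, i, j => if i = 2 ∧ j = 1 then -3 else cartanA i j

/-- The standard basis vector `e_k` (1-based index, junk `0` outside `1 ≤ k ≤ n`). -/
def stdE (n k : ℕ) : EuclideanSpace ℝ (Fin n) :=
  if h : 1 ≤ k ∧ k ≤ n then EuclideanSpace.single ⟨k - 1, by omega⟩ 1 else 0

/-- The labels `B`, `C`, `D` of the classical non-`A` types. -/
inductive BCD | B | C | D
deriving DecidableEq

/-- The root set of `B_n` / `C_n` / `D_n` in the standard realization. -/
def bcdRoots (t : BCD) (n : ℕ) : Set (EuclideanSpace ℝ (Fin n)) :=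
  {v | (∃ i j : ℕ, 1 ≤ i ∧ i < j ∧ j ≤ n ∧
          (v = stdE n i - stdE n j ∨ v = -(stdE n i - stdE n j) ∨
           v = stdE n i + stdE n j ∨ v = -(stdE n i + stdE n j))) ∨
       (match t with
        | .B => ∃ i : ℕ, 1 ≤ i ∧ i ≤ n ∧ (v = stdE n i ∨ v = -stdE n i)
        | .C => ∃ i : ℕ, 1 ≤ i ∧ i ≤ n ∧ (v = (2:ℝ) • stdE n i ∨ v = -((2:ℝ) • stdE n i))
        | .D => False)}

/-- The positive roots of `B_n` / `C_n` / `D_n` in the standard realization. -/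
def bcdPos (t : BCD) (n : ℕ) : Set (EuclideanSpace ℝ (Fin n)) :=
  {v | (∃ i j : ℕ, 1 ≤ i ∧ i < j ∧ j ≤ n ∧
          (v = stdE n i - stdE n j ∨ v = stdE n i + stdE n j)) ∨
       (match t with
        | .B => ∃ i : ℕ, 1 ≤ i ∧ i ≤ n ∧ v = stdE n i
        | .C => ∃ i : ℕ, 1 ≤ i ∧ i ≤ n ∧ v = (2:ℝ) • stdE n i
        | .D => False)}

/-- The simple roots of `B_n` / `C_n` / `D_n` in the standard realization. -/
def bcdSimple (t : BCD) (n : ℕ) : Set (EuclideanSpace ℝ (Fin n)) :=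
  {v | (∃ i : ℕ, 1 ≤ i ∧ i < n ∧ v = stdE n i - stdE n (i + 1)) ∨
       (match t with
        | .B => v = stdE n n
        | .C => v = (2:ℝ) • stdE n n
        | .D => v = stdE n (n - 1) + stdE n n)}

/-- The simple root `α_k` of `B_n` / `C_n` / `D_n` (1-based index `k`). -/
def bcdAlpha (t : BCD) (n k : ℕ) : EuclideanSpace ℝ (Fin n) :=
  if k < n then stdE n k - stdE n (k + 1)
  else match t with
  | .B => stdE n n
  | .C => (2:ℝ) • stdE n n
  | .D => stdE n (n - 1) + stdE n n

/-! Let `I` and `J` be the stabilizer types of `μ` and `λ`, and let `g = s_β x`. The summand of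
`c(xλ, yλ)` at `β` is nonzero exactly when `yλ = w g λ` for some `w ∈ W_I`. Then `v = y⁻¹ w g` fixes
`λ`, so `v ∈ W_J` because the stabilizer of a dominant weight is generated by the reflections it
contains, and `v` carries `g⁻¹ μ` to `y⁻¹ μ`. Since `g⁻¹ = s_γ x⁻¹` with `γ = x⁻¹ β`, this says
that the summand of `c(x⁻¹μ, y⁻¹μ)` at `γ` is nonzero, and the two signs differ by
`sgn y · sgn g = -sgn x · sgn y`. Integrality and dominance make `β ↦ x⁻¹ β` a bijection between
the index sets of the two sums. -/

lemma exists_linearMap_apply_eq {K E F ι : Type*} [DivisionRing K] [AddCommGroup E] [Module K E]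
    [AddCommGroup F] [Module K F] {v : ι → E} (hv : LinearIndependent K v) (g : ι → F) :
    ∃ f : E →ₗ[K] F, ∀ i, f (v i) = g i := by
  obtain ⟨r, hr⟩ := LinearMap.exists_leftInverse_of_injective _ (LinearMap.ker_eq_bot.2 hv)
  refine ⟨Finsupp.linearCombination K g ∘ₗ r, fun i => ?_⟩
  have hri : r (v i) = Finsupp.single i 1 := by
    simpa using LinearMap.congr_fun hr (Finsupp.single i 1)
  simp [hri]

open scoped ComplexOrder in
lemma IsInt.isPosInt_iff {z : ℂ} (hz : IsInt z) : IsPosInt z ↔ 0 < z := by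
  obtain ⟨n, rfl⟩ := hz
  refine ⟨fun ⟨m, hm, hnm⟩ => ?_, fun h => ⟨n, by exact_mod_cast h, rfl⟩⟩
  rw [hnm]
  exact_mod_cast hm

section Weights

variable {E : Type*} [NormedAddCommGroup E] [InnerProductSpace ℝ E]

lemma inner_coroot (v α : E) : ⟪v, coroot α⟫ = 2 / ⟪α, α⟫ * ⟪v, α⟫ :=
  real_inner_smul_right _ _ _

lemma coroot_neg (α : E) : coroot (-α) = -coroot α := by simp [coroot]

lemma apply_coroot (l : HStar E) (α : E) : l (coroot α) = (2 / ⟪α, α⟫) • l α := map_smul _ _ _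

lemma apply_coroot_eq_zero (l : HStar E) {α : E} (h : l α = 0) : l (coroot α) = 0 := by
  rw [apply_coroot, h, smul_zero]

lemma two_div_inner_self_pos {α : E} (hα : α ≠ 0) : 0 < 2 / ⟪α, α⟫ :=
  div_pos two_pos (real_inner_self_pos.2 hα)

lemma wAct_apply (w : E ≃ₗ[ℝ] E) (l : HStar E) (v : E) : wAct w l v = l (w⁻¹ v) := rfl

lemma wAct_one (l : HStar E) : wAct 1 l = l := rfl

lemma wAct_mul (w u : E ≃ₗ[ℝ] E) (l : HStar E) : wAct (w * u) l = wAct w (wAct u l) := rfl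

lemma wAct_inv_eq {w : E ≃ₗ[ℝ] E} {l m : HStar E} (h : wAct w l = m) : wAct w⁻¹ m = l := by
  rw [← h, ← wAct_mul, inv_mul_cancel, wAct_one]

lemma wAct_apply_apply (w : E ≃ₗ[ℝ] E) (l : HStar E) (v : E) : wAct w l (w v) = l v :=
  congrArg l (w.symm_apply_apply v)

end Weights

section Reflections

lemma reflV_apply (α v : V) : reflV α v = v - ⟪v, coroot α⟫ • α := by
  unfold reflV
  split_ifs with h
  · simp [inner_self_eq_zero.1 h]
  · rfl

lemma reflV_neg (α : V) : reflV (-α) = reflV α := by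
  ext v
  simp [reflV_apply, coroot_neg]

lemma reflV_self (α : V) : reflV α α = -α := by
  rcases eq_or_ne α 0 with rfl | h
  · simp
  · rw [reflV_apply, inner_coroot, div_mul_cancel₀ _ (inner_self_ne_zero.2 h), two_smul]
    abel

lemma reflV_reflV (α v : V) : reflV α (reflV α v) = v := by
  rw [reflV_apply α v, map_sub, map_smul, reflV_self, reflV_apply, smul_neg, sub_neg_eq_add,
    sub_add_cancel]

lemma reflV_mul_self (α : V) : reflV α * reflV α = 1 :=
  LinearEquiv.ext (reflV_reflV α)

lemma reflV_inv (α : V) : (reflV α)⁻¹ = reflV α :=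
  inv_eq_of_mul_eq_one_left (reflV_mul_self α)

lemma inner_reflV_reflV (α u v : V) : ⟪reflV α u, reflV α v⟫ = ⟪u, v⟫ := by
  rcases eq_or_ne α 0 with rfl | h
  · simp [reflV_apply]
  · have h' : ⟪α, α⟫ ≠ 0 := inner_self_ne_zero.2 h
    simp only [reflV_apply, inner_sub_left, inner_sub_right, real_inner_smul_left,
      real_inner_smul_right, inner_coroot, real_inner_comm v α]
    field_simp
    ring

lemma reflV_mem_weyl {Φ' : Set V} {α : V} (h : α ∈ Φ') : reflV α ∈ weyl Φ' :=
  Subgroup.subset_closure ⟨α, h, rfl⟩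

lemma weyl_mono {A B : Set V} (h : A ⊆ B) : weyl A ≤ weyl B :=
  Subgroup.closure_mono fun _ ⟨α, hα, e⟩ => ⟨α, h hα, e⟩

variable {Φ' : Set V} {w : V ≃ₗ[ℝ] V}

lemma inner_weyl_apply (hw : w ∈ weyl Φ') (u v : V) : ⟪w u, w v⟫ = ⟪u, v⟫ := by
  induction hw using Subgroup.closure_induction generalizing u v with
  | mem _ h =>
    obtain ⟨α, -, rfl⟩ := h
    exact inner_reflV_reflV α u v
  | one => rfl
  | mul _ _ _ _ hw₁ hw₂ => rw [LinearEquiv.mul_apply, LinearEquiv.mul_apply, hw₁, hw₂]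
  | inv w _ hw => simpa using (hw (w⁻¹ u) (w⁻¹ v)).symm

lemma coroot_weyl_apply (hw : w ∈ weyl Φ') (γ : V) : coroot (w γ) = w (coroot γ) := by
  rw [coroot, coroot, inner_weyl_apply hw, map_smul]

lemma reflV_weyl_apply (hw : w ∈ weyl Φ') (γ : V) : reflV (w γ) = w * reflV γ * w⁻¹ := by
  refine eq_mul_inv_of_mul_eq (LinearEquiv.ext fun v => ?_)
  simp only [LinearEquiv.mul_apply, reflV_apply, coroot_weyl_apply hw, inner_weyl_apply hw,
    map_sub, map_smul]

lemma coroot_reflV_apply (α γ : V) :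
    coroot (reflV α γ) = coroot γ - ⟪α, coroot γ⟫ • coroot α := by
  rw [coroot_weyl_apply (reflV_mem_weyl (Set.mem_singleton α)), reflV_apply, inner_coroot α γ,
    coroot, coroot, real_inner_smul_left, real_inner_smul_right, smul_smul, real_inner_comm γ α]
  congr 2
  ring

lemma sRefl_eq_wAct (β : V) (l : HStar V) : sRefl β l = wAct (reflV β) l := by
  ext v
  simp only [sRefl, emb, LinearMap.sub_apply, LinearMap.smul_apply, LinearMap.coe_mk,
    AddHom.coe_mk, wAct_apply, reflV_inv, reflV_apply, map_sub, map_smul, apply_coroot,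
    inner_coroot, real_inner_comm v β, Complex.real_smul, smul_eq_mul]
  push_cast
  ring

lemma wAct_reflV_of_apply_eq_zero {α : V} {l : HStar V} (h : l α = 0) :
    wAct (reflV α) l = l := by
  rw [← sRefl_eq_wAct, sRefl, apply_coroot_eq_zero l h, zero_smul, sub_zero]

end Reflections

namespace RootSys

variable {S : RootSys V}

section Roots

variable {w : V ≃ₗ[ℝ] V} {α β : V}

lemma pos_mem (h : α ∈ S.pos) : α ∈ S.Φ := S.pos_subset h

lemma simple_mem_pos (h : α ∈ S.Δ) : α ∈ S.pos := S.simple_subset h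

lemma simple_mem (h : α ∈ S.Δ) : α ∈ S.Φ := pos_mem (simple_mem_pos h)

lemma neg_mem_pos_iff (h : α ∈ S.Φ) : -α ∈ S.pos ↔ α ∉ S.pos :=
  ⟨fun hneg hpos => S.not_both α hpos hneg, (S.mem_pos_or α h).resolve_left⟩

lemma weyl_apply_mem (hw : w ∈ weyl (S.Φ : Set V)) (h : β ∈ S.Φ) : w β ∈ S.Φ := by
  induction hw using Subgroup.closure_induction'' generalizing β with
  | mem _ h' =>
    obtain ⟨α, hα, rfl⟩ := h'
    exact S.refl_mem α hα β h
  | inv_mem _ h' =>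
    obtain ⟨α, hα, rfl⟩ := h'
    exact reflV_inv α ▸ S.refl_mem α hα β h
  | one => exact h
  | mul _ _ _ _ hw₁ hw₂ => exact hw₁ (hw₂ h)

lemma apply_nonneg_of_mem_pos {M : Type*} [AddCommGroup M] [PartialOrder M] [IsOrderedAddMonoid M]
    [Module ℝ M] [PosSMulMono ℝ M] {f : V →ₗ[ℝ] M} (hf : ∀ α ∈ S.Δ, 0 ≤ f α)
    (hβ : β ∈ S.pos) : 0 ≤ f β := by
  obtain ⟨c, hc, rfl⟩ := S.simple_gen β hβ
  rw [map_sum]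
  refine Finset.sum_nonneg fun α hα => ?_
  rw [map_smul]
  exact smul_nonneg (hc α hα) (hf α hα)

lemma exists_linearMap_simple (S : RootSys V) (g : V → ℝ) :
    ∃ f : V →ₗ[ℝ] ℝ, ∀ α ∈ S.Δ, f α = g α := by
  obtain ⟨f, hf⟩ := exists_linearMap_apply_eq S.simple_indep fun α => g α
  exact ⟨f, fun α hα => hf ⟨α, hα⟩⟩

/- The sum `f` of the coordinates at the simple roots other than `α` is invariant under `s_α`. If
`s_α β` were negative, `f β` would be both `≥ 0` and `≤ 0`, forcing `β ∈ ℝ α`. -/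
lemma reflV_simple_mem_pos (hα : α ∈ S.Δ) (hβ : β ∈ S.pos) (hne : β ≠ α) :
    reflV α β ∈ S.pos := by
  by_contra hneg
  obtain ⟨f, hf⟩ := exists_linearMap_simple S fun γ => if γ = α then 0 else 1
  have hf_nonneg : ∀ γ ∈ S.Δ, 0 ≤ f γ := fun γ hγ => by rw [hf γ hγ]; split_ifs <;> norm_num
  have hf_refl : f (reflV α β) = f β := by simp [reflV_apply, hf α hα]
  have hfβ : f β = 0 := by
    have h₁ := apply_nonneg_of_mem_pos hf_nonneg hβ
    have h₂ := apply_nonneg_of_mem_pos hf_nonneg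
      ((neg_mem_pos_iff (S.refl_mem α (simple_mem hα) β (pos_mem hβ))).2 hneg)
    rw [map_neg, hf_refl] at h₂
    linarith
  obtain ⟨c, hc, hβc⟩ := S.simple_gen β hβ
  have hsum : ∑ γ ∈ S.Δ, c γ * f γ = 0 := by
    rw [← hfβ]
    conv_rhs => rw [hβc]
    simp only [map_sum, map_smul, smul_eq_mul]
  have hcγ : ∀ γ ∈ S.Δ, γ ≠ α → c γ = 0 := fun γ hγ hγα => by
    have := (Finset.sum_eq_zero_iff_of_nonneg
      fun δ hδ => mul_nonneg (hc δ hδ) (hf_nonneg δ hδ)).1 hsum γ hγ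
    simpa [hf γ hγ, hγα] using this
  have hβα : β = c α • α := by
    conv_lhs => rw [hβc]
    exact Finset.sum_eq_single_of_mem α hα fun γ hγ hγα => by rw [hcγ γ hγ hγα, zero_smul]
  rcases S.reduced α (simple_mem hα) (c α) (hβα ▸ pos_mem hβ) with h | h
  · exact hne (by rw [hβα, h, one_smul])
  · linarith [hc α hα]

lemma exists_simple_inner_pos (hβ : β ∈ S.pos) : ∃ α ∈ S.Δ, 0 < ⟪β, α⟫ := by
  by_contra! hle
  have hneg : 0 ≤ (-innerₗ V β) β :=
    apply_nonneg_of_mem_pos (fun α hα => by simpa using hle α hα) hβ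
  have hpos : 0 < ⟪β, β⟫ := real_inner_self_pos.2 (S.ne_zero β (pos_mem hβ))
  simp only [LinearMap.neg_apply, innerₗ_apply_apply] at hneg
  linarith

/- Descent on the height: a simple reflection `s_α` with `⟨γ, α⟩ > 0` lowers the height of `γ`. -/
lemma pos_induction {P : V → Prop} (simple : ∀ α ∈ S.Δ, P α)
    (refl : ∀ α ∈ S.Δ, ∀ γ ∈ S.pos, P γ → P (reflV α γ)) (hβ : β ∈ S.pos) : P β := by
  by_contra hPβ
  obtain ⟨ht, hht⟩ := exists_linearMap_simple S fun _ => 1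
  obtain ⟨γ, hγ, hmin⟩ := Finset.exists_min_image (S.pos.filter fun γ => ¬ P γ) ht
    ⟨β, Finset.mem_filter.2 ⟨hβ, hPβ⟩⟩
  obtain ⟨hγ, hPγ⟩ := Finset.mem_filter.1 hγ
  obtain ⟨α, hα, hγα⟩ := exists_simple_inner_pos hγ
  have hpos : reflV α γ ∈ S.pos :=
    reflV_simple_mem_pos hα hγ fun h => hPγ (h ▸ simple α hα)
  have hP : ¬ P (reflV α γ) := fun h => hPγ (reflV_reflV α γ ▸ refl α hα _ hpos h)
  have hle := hmin _ (Finset.mem_filter.2 ⟨hpos, hP⟩)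
  have hlt : 0 < ⟪γ, coroot α⟫ := by
    rw [inner_coroot]
    exact mul_pos (two_div_inner_self_pos (S.ne_zero α (simple_mem hα))) hγα
  rw [reflV_apply, map_sub, map_smul, hht α hα, smul_eq_mul, mul_one] at hle
  linarith

end Roots

section Generation

variable {w : V ≃ₗ[ℝ] V} {α : V}

lemma weyl_simple (S : RootSys V) : weyl (S.Δ : Set V) = weyl (S.Φ : Set V) := by
  have hpos : ∀ γ ∈ S.pos, reflV γ ∈ weyl (S.Δ : Set V) := fun γ hγ => by
    refine pos_induction (P := fun γ => reflV γ ∈ weyl (S.Δ : Set V))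
      (fun α hα => reflV_mem_weyl hα) (fun α hα γ _ ih => ?_) hγ
    have hs : reflV α ∈ weyl (S.Δ : Set V) := reflV_mem_weyl hα
    rw [reflV_weyl_apply hs]
    exact mul_mem (mul_mem hs ih) (inv_mem hs)
  refine le_antisymm (weyl_mono fun α hα => simple_mem hα) ((Subgroup.closure_le _).2 ?_)
  rintro _ ⟨γ, hγ, rfl⟩
  rcases S.mem_pos_or γ hγ with h | h
  · exact hpos γ h
  · exact reflV_neg γ ▸ hpos _ h

/-- `S.IsWord n w`: the element `w` is a product of `n` simple reflections, i.e. it has a not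
necessarily reduced expression of length `n`. Inductions on the length run over such expressions, so
that `len` need not be compared with the Coxeter length. -/
inductive IsWord (S : RootSys V) : ℕ → (V ≃ₗ[ℝ] V) → Prop
  | one : IsWord S 0 1
  | refl_mul {n : ℕ} {w : V ≃ₗ[ℝ] V} {α : V} (hα : α ∈ S.Δ) (hw : IsWord S n w) :
      IsWord S (n + 1) (reflV α * w)

lemma exists_isWord (hw : w ∈ weyl (S.Φ : Set V)) : ∃ n, S.IsWord n w := by
  rw [← weyl_simple] at hw
  induction hw using Subgroup.closure_induction_left with
  | one => exact ⟨0, .one⟩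
  | mul_left _ h _ _ ih =>
    obtain ⟨α, hα, rfl⟩ := h
    exact ih.imp' (· + 1) fun _ => .refl_mul hα
  | inv_mul_cancel _ h _ _ ih =>
    obtain ⟨α, hα, rfl⟩ := h
    rw [reflV_inv]
    exact ih.imp' (· + 1) fun _ => .refl_mul hα

lemma IsWord.strong_exchange {n : ℕ} (hw : S.IsWord n w) (hα : α ∈ S.pos)
    (hneg : w⁻¹ α ∉ S.pos) : ∃ m < n, S.IsWord m (reflV α * w) := by
  induction hw generalizing α with
  | one => exact absurd hα hneg
  | @refl_mul n w γ hγ hw ih =>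
    rcases eq_or_ne α γ with rfl | hne
    · exact ⟨n, n.lt_succ_self, by rwa [← mul_assoc, reflV_mul_self, one_mul]⟩
    · rw [mul_inv_rev, reflV_inv] at hneg
      obtain ⟨m, hmn, hm⟩ := ih (reflV_simple_mem_pos hγ hα hne) hneg
      have hconj : reflV γ * (reflV (reflV γ α) * w) = reflV α * (reflV γ * w) := by
        rw [reflV_weyl_apply (reflV_mem_weyl (Set.mem_singleton γ)), reflV_inv, ← mul_assoc,
          ← mul_assoc, ← mul_assoc, reflV_mul_self, one_mul, mul_assoc]
      exact ⟨m + 1, Nat.succ_lt_succ hmn, hconj ▸ .refl_mul hγ hm⟩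

end Generation

section Stabilizer

open scoped ComplexOrder

variable {w : V ≃ₗ[ℝ] V} {l : HStar V}

lemma weyl_singSet_le (S : RootSys V) (l : HStar V) :
    weyl (singSet S l) ≤ weyl (S.Φ : Set V) :=
  weyl_mono fun _ h => h.1

lemma wAct_eq_of_mem_weyl_singSet (hw : w ∈ weyl (singSet S l)) : wAct w l = l := by
  induction hw using Subgroup.closure_induction with
  | mem _ h =>
    obtain ⟨α, hα, rfl⟩ := h
    exact wAct_reflV_of_apply_eq_zero hα.2
  | one => rfl
  | mul _ _ _ _ hw₁ hw₂ => rw [wAct_mul, hw₂, hw₁]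
  | inv _ _ hw => exact wAct_inv_eq hw

/- Induction on the length of an expression `w = s_α u`: either the exchange condition shortens it,
or `w` makes `α` change sign, so that dominance forces `⟨l, α⟩ = 0` and both `s_α` and `u` fix
`l`. -/
lemma mem_weyl_singSet_of_wAct_eq (hl : ∀ α ∈ S.Δ, 0 ≤ l α) (hw : w ∈ weyl (S.Φ : Set V))
    (hfix : wAct w l = l) : w ∈ weyl (singSet S l) := by
  obtain ⟨n, hn⟩ := exists_isWord hw
  clear hw
  induction n using Nat.strong_induction_on generalizing w with
  | _ n ih =>
  cases hn with
  | one => exact one_mem _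
  | @refl_mul n w α hα hword =>
    by_cases hpos : w⁻¹ α ∈ S.pos
    · have hlα : l α = -l (w⁻¹ α) := by
        conv_lhs => rw [← hfix, wAct_apply, mul_inv_rev, reflV_inv, LinearEquiv.mul_apply,
          reflV_self, map_neg, map_neg]
      have hlα_zero : l α = 0 :=
        le_antisymm (hlα ▸ neg_nonpos.2 (apply_nonneg_of_mem_pos hl hpos)) (hl α hα)
      have hfix' : wAct w l = l := by
        rw [wAct_mul] at hfix
        rw [← wAct_inv_eq hfix, reflV_inv, wAct_reflV_of_apply_eq_zero hlα_zero]
      exact mul_mem (reflV_mem_weyl ⟨simple_mem hα, hlα_zero⟩) (ih n n.lt_succ_self hfix' hword)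
    · obtain ⟨m, hmn, hm⟩ := hword.strong_exchange (simple_mem_pos hα) hpos
      exact ih m (hmn.trans n.lt_succ_self) hfix hm

end Stabilizer

section Sign

variable {w u : V ≃ₗ[ℝ] V} {α β γ : V}

/-- The sign of a root: `1` on positive roots and `-1` on negative ones (and, as a junk value, on
vectors that are not roots). It turns `(-1)^{ℓ(w)}` into a product over the positive roots. -/
def rootSign (S : RootSys V) (β : V) : ℤ := if β ∈ S.pos then 1 else -1

/-- The sign character `w ↦ (-1)^{ℓ(w)}`, multiplicative on the Weyl group by `weylSign_mul`. -/
def weylSign (S : RootSys V) (w : V ≃ₗ[ℝ] V) : ℤ := (-1) ^ len S w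

lemma rootSign_of_mem_pos (h : β ∈ S.pos) : S.rootSign β = 1 := if_pos h

lemma rootSign_neg (h : β ∈ S.Φ) : S.rootSign (-β) = -S.rootSign β := by
  simp only [rootSign, neg_mem_pos_iff h]
  split_ifs <;> rfl

lemma weylSign_mul_self (S : RootSys V) (w : V ≃ₗ[ℝ] V) : S.weylSign w * S.weylSign w = 1 := by
  rw [weylSign, ← mul_pow, neg_one_mul, neg_neg, one_pow]

lemma weylSign_eq_prod (S : RootSys V) (w : V ≃ₗ[ℝ] V) :
    S.weylSign w = ∏ β ∈ S.pos, S.rootSign (w β) := by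
  have hset : {β ∈ (S.pos : Set V) | w β ∉ (S.pos : Set V)} =
      ((S.pos.filter fun β => w β ∉ S.pos : Finset V) : Set V) := by ext; simp
  simp only [rootSign]
  rw [weylSign, len, hset, Set.ncard_coe_finset, Finset.prod_ite, Finset.prod_const_one,
    Finset.prod_const, one_mul]

lemma prod_pos_weyl_apply {M : Type*} [CommMonoid M] (hw : w ∈ weyl (S.Φ : Set V)) {g : V → M}
    (hg : ∀ β ∈ S.Φ, g (-β) = g β) : ∏ β ∈ S.pos, g (w β) = ∏ β ∈ S.pos, g β := by
  let rep : V → V := fun β => if β ∈ S.pos then β else -β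
  have rep_mem : ∀ β ∈ S.Φ, rep β ∈ S.pos := fun β hβ => by
    by_cases h : β ∈ S.pos
    · simpa only [rep, if_pos h] using h
    · simpa only [rep, if_neg h] using (neg_mem_pos_iff hβ).2 h
  have g_rep : ∀ β ∈ S.Φ, g (rep β) = g β := fun β hβ => by
    by_cases h : β ∈ S.pos
    · simp only [rep, if_pos h]
    · simp only [rep, if_neg h, hg β hβ]
  have rep_rep : ∀ u : V ≃ₗ[ℝ] V, ∀ β ∈ S.pos, rep (u⁻¹ (rep (u β))) = β := fun u β hβ => by
    by_cases h : u β ∈ S.pos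
    · simp [rep, h, hβ]
    · simp [rep, h, S.not_both β hβ]
  have hwi := inv_mem hw
  refine Finset.prod_bij' (fun β _ => rep (w β)) (fun β _ => rep (w⁻¹ β))
    (fun β hβ => rep_mem _ (weyl_apply_mem hw (pos_mem hβ)))
    (fun β hβ => rep_mem _ (weyl_apply_mem hwi (pos_mem hβ)))
    (fun β hβ => rep_rep w β hβ) (fun β hβ => by simpa using rep_rep w⁻¹ β hβ)
    fun β hβ => (g_rep _ (weyl_apply_mem hw (pos_mem hβ))).symm

lemma weylSign_mul_prod_weyl_apply {R : Type*} [CommRing R] (hw : w ∈ weyl (S.Φ : Set V))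
    {η : V → R} (hη : ∀ β ∈ S.Φ, η (-β) = -η β) :
    (S.weylSign w : R) * ∏ β ∈ S.pos, η (w β) = ∏ β ∈ S.pos, η β := by
  have heven : ∀ β ∈ S.Φ, (S.rootSign (-β) : R) * η (-β) = S.rootSign β * η β := fun β hβ => by
    rw [rootSign_neg hβ, hη β hβ, Int.cast_neg, neg_mul_neg]
  calc (S.weylSign w : R) * ∏ β ∈ S.pos, η (w β)
      = ∏ β ∈ S.pos, (S.rootSign (w β) : R) * η (w β) := by
        rw [weylSign_eq_prod, Int.cast_prod, Finset.prod_mul_distrib]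
    _ = ∏ β ∈ S.pos, (S.rootSign β : R) * η β :=
        prod_pos_weyl_apply hw (g := fun β => (S.rootSign β : R) * η β) heven
    _ = ∏ β ∈ S.pos, η β := Finset.prod_congr rfl fun β hβ => by
        rw [rootSign_of_mem_pos hβ, Int.cast_one, one_mul]

lemma weylSign_mul (hw : w ∈ weyl (S.Φ : Set V)) (hu : u ∈ weyl (S.Φ : Set V)) :
    S.weylSign (w * u) = S.weylSign w * S.weylSign u := by
  have h := weylSign_mul_prod_weyl_apply hu (η := fun β => S.rootSign (w β)) fun β hβ => by
    rw [map_neg, rootSign_neg (weyl_apply_mem hw hβ)]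
  have h' : S.weylSign u * S.weylSign (w * u) = S.weylSign w := by
    simpa only [weylSign_eq_prod S (w * u), weylSign_eq_prod S w, LinearEquiv.mul_apply,
      Int.cast_id] using h
  rw [← h', mul_right_comm, weylSign_mul_self, one_mul]

lemma weylSign_one (S : RootSys V) : S.weylSign 1 = 1 := by
  rw [weylSign_eq_prod]
  exact Finset.prod_eq_one fun β hβ => rootSign_of_mem_pos hβ

lemma weylSign_inv (hw : w ∈ weyl (S.Φ : Set V)) : S.weylSign w⁻¹ = S.weylSign w := by
  have h : S.weylSign w * S.weylSign w⁻¹ = 1 := by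
    rw [← weylSign_mul hw (inv_mem hw), mul_inv_cancel, weylSign_one]
  linear_combination S.weylSign w * h - S.weylSign w⁻¹ * weylSign_mul_self S w

lemma weylSign_reflV_simple (hα : α ∈ S.Δ) : S.weylSign (reflV α) = -1 := by
  have hneg : reflV α α ∉ S.pos := reflV_self α ▸ S.not_both α (simple_mem_pos hα)
  rw [weylSign_eq_prod, ← Finset.mul_prod_erase _ _ (simple_mem_pos hα), rootSign, if_neg hneg,
    Finset.prod_eq_one, mul_one]
  intro β hβ
  obtain ⟨hne, hβ⟩ := Finset.mem_erase.1 hβ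
  exact rootSign_of_mem_pos (reflV_simple_mem_pos hα hβ hne)

lemma weylSign_reflV (hγ : γ ∈ S.Φ) : S.weylSign (reflV γ) = -1 := by
  have hpos : ∀ γ ∈ S.pos, S.weylSign (reflV γ) = -1 := fun γ hγ => by
    refine pos_induction (P := fun γ => S.weylSign (reflV γ) = -1)
      (fun α hα => weylSign_reflV_simple hα) (fun α hα γ hγ ih => ?_) hγ
    have hs : reflV α ∈ weyl (S.Φ : Set V) := reflV_mem_weyl (simple_mem hα)
    have ht : reflV γ ∈ weyl (S.Φ : Set V) := reflV_mem_weyl (pos_mem hγ)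
    rw [reflV_weyl_apply hs, weylSign_mul (mul_mem hs ht) (inv_mem hs), weylSign_mul hs ht,
      weylSign_inv hs, mul_right_comm, weylSign_mul_self, one_mul, ih]
  rcases S.mem_pos_or γ hγ with h | h
  · exact hpos γ h
  · exact reflV_neg γ ▸ hpos _ h

lemma len_reflV_ne_zero (hγ : γ ∈ S.Φ) : len S (reflV γ) ≠ 0 := fun h => by
  have hsign := weylSign_reflV hγ
  rw [weylSign, h] at hsign
  norm_num at hsign

/- The odd function equal to `l` off `Φ_l` and to `m` on `Φ_l` vanishes at no root and is invariant
under `u`. -/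
lemma weylSign_eq_one_of_wAct_eq {l m : HStar V} (hu : u ∈ weyl (S.Φ : Set V))
    (hul : wAct u l = l) (hum : wAct u m = m) (hm : IsRegularOn (singSet S l) m) :
    S.weylSign u = 1 := by
  let η : V → ℂ := fun β => if l β = 0 then m β else l β
  have η_neg : ∀ β ∈ S.Φ, η (-β) = -η β := fun β _ => by
    by_cases h : l β = 0 <;> simp [η, h]
  have η_ne_zero : ∀ β ∈ S.pos, η β ≠ 0 := fun β hβ => by
    by_cases h : l β = 0
    · simpa only [η, if_pos h] using hm β ⟨pos_mem hβ, h⟩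
    · simpa only [η, if_neg h] using h
  have η_apply : ∀ β, η (u β) = η β := fun β => by
    have hl : l (u β) = l β := by rw [← wAct_apply_apply u l β, hul]
    have hm : m (u β) = m β := by rw [← wAct_apply_apply u m β, hum]
    simp only [η, hl, hm]
  have hprod := weylSign_mul_prod_weyl_apply hu η_neg
  simp only [η_apply] at hprod
  exact_mod_cast mul_eq_right₀ (Finset.prod_ne_zero_iff.2 η_ne_zero) |>.1 hprod

end Sign

section Dominant

open scoped ComplexOrder

variable {l : HStar V} {γ : V}

/-- Dominant integral weights: `⟨l, α^∨⟩ ∈ ℤ_{≥0}` for every simple root `α`. -/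
def IsDominantIntegral (S : RootSys V) (l : HStar V) : Prop :=
  ∀ α ∈ S.Δ, ∃ n : ℤ, 0 ≤ n ∧ l (coroot α) = (n : ℂ)

lemma IsDominantIntegral.apply_nonneg (hl : S.IsDominantIntegral l) :
    ∀ α ∈ S.Δ, 0 ≤ l α := fun α hα => by
  obtain ⟨n, hn, hlα⟩ := hl α hα
  have hpos := two_div_inner_self_pos (S.ne_zero α (simple_mem hα))
  rw [← smul_nonneg_iff_nonneg_of_pos_left hpos, ← apply_coroot, hlα]
  exact_mod_cast hn

lemma IsDominantIntegral.isInt (hl : S.IsDominantIntegral l) (hγ : γ ∈ S.Φ) :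
    IsInt (l (coroot γ)) := by
  have hpos : ∀ γ ∈ S.pos, IsInt (l (coroot γ)) := fun γ hγ => by
    refine pos_induction (P := fun γ => IsInt (l (coroot γ)))
      (fun α hα => (hl α hα).imp fun _ h => h.2) (fun α hα γ hγ ih => ?_) hγ
    obtain ⟨n, hn⟩ := ih
    obtain ⟨m, -, hm⟩ := hl α hα
    obtain ⟨k, hk⟩ := S.crystallographic γ (pos_mem hγ) α (simple_mem hα)
    refine ⟨n - k * m, ?_⟩
    rw [coroot_reflV_apply, map_sub, map_smul, hn, hm, hk]
    simp
  rcases S.mem_pos_or γ hγ with h | h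
  · exact hpos γ h
  · obtain ⟨n, hn⟩ := hpos _ h
    rw [coroot_neg, map_neg, neg_eq_iff_eq_neg] at hn
    exact ⟨-n, by rw [hn, Int.cast_neg]⟩

lemma IsDominantIntegral.isPosInt_iff (hl : S.IsDominantIntegral l) (hγ : γ ∈ S.Φ) :
    IsPosInt (l (coroot γ)) ↔ γ ∈ S.pos ∧ γ ∉ singSet S l := by
  have hpos := two_div_inner_self_pos (S.ne_zero γ hγ)
  rw [(hl.isInt hγ).isPosInt_iff, apply_coroot, smul_pos_iff_of_pos_left hpos]
  constructor
  · refine fun hlγ => ⟨by_contra fun hneg => ?_, fun h => hlγ.ne' h.2⟩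
    have h := apply_nonneg_of_mem_pos hl.apply_nonneg ((neg_mem_pos_iff hγ).2 hneg)
    rw [map_neg] at h
    exact hlγ.not_ge (neg_nonneg.1 h)
  · rintro ⟨hγpos, hne⟩
    exact (apply_nonneg_of_mem_pos hl.apply_nonneg hγpos).lt_of_ne' fun h => hne ⟨hγ, h⟩

end Dominant

section Duality

variable {I J : Finset V} {lam mu l m : HStar V} {w g x y : V ≃ₗ[ℝ] V} {β : V}

lemma isRegularOn_inv_of_isRegularOn (hy : y ∈ weyl (S.Φ : Set V))
    (hreg : IsRegularOn (singSet S mu) (wAct y lam)) :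
    IsRegularOn (singSet S lam) (wAct y⁻¹ mu) := by
  rintro α ⟨hα, hlam⟩ hmu
  rw [wAct_apply, inv_inv] at hmu
  exact hreg (y α) ⟨weyl_apply_mem hy hα, hmu⟩ (by rwa [wAct_apply_apply])

lemma isRegularOn_of_mem_doubleCoset (hlam : singSet S lam = PhiI S J)
    (hy : y ∈ doubleCoset S I J) :
    IsRegularOn (PhiI S I) (wAct y lam) := by
  obtain ⟨hyW, hlen⟩ := hy
  intro α hα hzero
  have hγΦ : y⁻¹ α ∈ S.Φ := weyl_apply_mem (inv_mem hyW) hα.1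
  have hγ : y⁻¹ α ∈ PhiI S J := hlam ▸ ⟨hγΦ, hzero⟩
  have hfix : reflV α * y * reflV (y⁻¹ α) = y := by
    rw [reflV_weyl_apply (inv_mem hyW), inv_inv]
    calc reflV α * y * (y⁻¹ * reflV α * y) = reflV α * reflV α * y := by group
      _ = y := by rw [reflV_mul_self, one_mul]
  have hsum := hlen _ (reflV_mem_weyl hα) _ (reflV_mem_weyl hγ)
  rw [hfix] at hsum
  have := len_reflV_ne_zero hα.1
  omega

lemma isRegularOn_of_wAct (hw : w ∈ weyl (singSet S mu))
    (hreg : IsRegularOn (singSet S mu) (wAct w l)) : IsRegularOn (singSet S mu) l := by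
  rintro α ⟨hα, hmu⟩
  have hwα : w α ∈ singSet S mu := by
    refine ⟨weyl_apply_mem (weyl_singSet_le S mu hw) hα, ?_⟩
    rwa [← wAct_eq_of_mem_weyl_singSet hw, wAct_apply_apply]
  exact wAct_apply_apply w l α ▸ hreg _ hwα

lemma sgnW_eq_weylSign (hw : w ∈ weyl (singSet S mu)) (hm : m = wAct w l)
    (hreg : IsRegularOn (singSet S mu) m) : sgnW S (singSet S mu) l m = S.weylSign w := by
  have h : IsRegularOn (singSet S mu) l ∧ IsRegularOn (singSet S mu) m ∧
      ∃ u, u ∈ weyl (singSet S mu) ∧ m = wAct u l :=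
    ⟨isRegularOn_of_wAct hw (hm ▸ hreg), hreg, w, hw, hm⟩
  obtain ⟨hu, hmu⟩ := h.2.2.choose_spec
  rw [sgnW, dif_pos h]
  set u := h.2.2.choose
  have hwΦ := weyl_singSet_le S mu hw
  have huΦ := weyl_singSet_le S mu hu
  have hfix : wAct (w * u⁻¹) m = m := by rw [wAct_mul, wAct_inv_eq hmu.symm, ← hm]
  have hone : S.weylSign (w * u⁻¹) = 1 :=
    weylSign_eq_one_of_wAct_eq (mul_mem hwΦ (inv_mem huΦ))
      (wAct_eq_of_mem_weyl_singSet (mul_mem hw (inv_mem hu))) hfix hreg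
  rw [← inv_mul_cancel_right w u, weylSign_mul (mul_mem hwΦ (inv_mem huΦ)) huΦ, hone, one_mul]
  rfl

lemma inv_mul_mul_mem_weyl_singSet (hlam : S.IsDominantIntegral lam)
    (hg : g ∈ weyl (S.Φ : Set V)) (hy : y ∈ weyl (S.Φ : Set V)) (hw : w ∈ weyl (singSet S mu))
    (h : wAct y lam = wAct w (wAct g lam)) :
    y⁻¹ * w * g ∈ weyl (singSet S lam) ∧ wAct y⁻¹ mu = wAct (y⁻¹ * w * g) (wAct g⁻¹ mu) := by
  have hwΦ := weyl_singSet_le S mu hw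
  constructor
  · refine mem_weyl_singSet_of_wAct_eq hlam.apply_nonneg
      (mul_mem (mul_mem (inv_mem hy) hwΦ) hg) ?_
    rw [wAct_mul, wAct_mul, ← h, wAct_inv_eq rfl]
  · rw [← wAct_mul, mul_inv_cancel_right, wAct_mul, wAct_eq_of_mem_weyl_singSet hw]

lemma sgnW_dual (hlam : S.IsDominantIntegral lam) (hmu : S.IsDominantIntegral mu)
    (hg : g ∈ weyl (S.Φ : Set V)) (hy : y ∈ weyl (S.Φ : Set V))
    (hreg : IsRegularOn (singSet S mu) (wAct y lam)) :
    sgnW S (singSet S mu) (wAct g lam) (wAct y lam) =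
      S.weylSign y * S.weylSign g * sgnW S (singSet S lam) (wAct g⁻¹ mu) (wAct y⁻¹ mu) := by
  by_cases h : ∃ w, w ∈ weyl (singSet S mu) ∧ wAct y lam = wAct w (wAct g lam)
  · obtain ⟨w, hw, hyw⟩ := h
    have hwΦ := weyl_singSet_le S mu hw
    obtain ⟨hv, hyv⟩ := inv_mul_mul_mem_weyl_singSet hlam hg hy hw hyw
    rw [sgnW_eq_weylSign hw hyw hreg,
      sgnW_eq_weylSign hv hyv (isRegularOn_inv_of_isRegularOn hy hreg),
      weylSign_mul (mul_mem (inv_mem hy) hwΦ) hg, weylSign_mul (inv_mem hy) hwΦ, weylSign_inv hy]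
    linear_combination (-S.weylSign w * S.weylSign g * S.weylSign g) * weylSign_mul_self S y -
      S.weylSign w * weylSign_mul_self S g
  · have h' : ¬ ∃ v, v ∈ weyl (singSet S lam) ∧ wAct y⁻¹ mu = wAct v (wAct g⁻¹ mu) := by
      rintro ⟨v, hv, hyv⟩
      have hw := inv_mul_mul_mem_weyl_singSet hmu (inv_mem hg) (inv_mem hy) hv hyv
      simp only [inv_inv] at hw
      exact h ⟨_, hw⟩
    rw [sgnW, sgnW, dif_neg fun hh => h hh.2.2, dif_neg fun hh => h' hh.2.2, mul_zero]

lemma jc_eq_finsum_PsiP (S : RootSys V) (Φ'' Φ' : Set V) (l m : HStar V) :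
    jc S Φ'' Φ' l m = ∑ᶠ β ∈ PsiP S Φ'' Φ' l, sgnW S Φ'' (sRefl β l) m := by
  refine finsum_mem_inter_support_eq' _ _ _ fun β hβ => ⟨fun h => h.1, fun h => ⟨h, ?_⟩⟩
  by_contra hsing
  exact hβ (dif_neg fun hh => hsing hh.1)

lemma mem_PsiP_wAct_iff (hmu : S.IsDominantIntegral mu) (hx : x ∈ weyl (S.Φ : Set V)) :
    β ∈ PsiP S (singSet S mu) (S.Φ : Set V) (wAct x lam) ↔
      β ∈ S.Φ ∧ IsPosInt (mu (coroot β)) ∧ IsPosInt (lam (coroot (x⁻¹ β))) := by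
  rw [coroot_weyl_apply (inv_mem hx)]
  constructor
  · rintro ⟨⟨hβ, hpos⟩, hmuβ, hint⟩
    exact ⟨hβ, (hmu.isPosInt_iff hβ).2 ⟨hpos, hmuβ⟩, hint⟩
  · rintro ⟨hβ, hmuβ, hint⟩
    obtain ⟨hpos, hmuβ⟩ := (hmu.isPosInt_iff hβ).1 hmuβ
    exact ⟨⟨hβ, hpos⟩, hmuβ, hint⟩

lemma bijOn_PsiP (hlam : S.IsDominantIntegral lam) (hmu : S.IsDominantIntegral mu)
    (hx : x ∈ weyl (S.Φ : Set V)) :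
    Set.BijOn (⇑x⁻¹) (PsiP S (singSet S mu) (S.Φ : Set V) (wAct x lam))
      (PsiP S (singSet S lam) (S.Φ : Set V) (wAct x⁻¹ mu)) := by
  have hxi := inv_mem hx
  refine ⟨fun β hβ => ?_, x⁻¹.injective.injOn, fun γ hγ => ⟨x γ, ?_, by simp⟩⟩
  · obtain ⟨hβ, h⟩ := (mem_PsiP_wAct_iff hmu hx).1 hβ
    exact (mem_PsiP_wAct_iff hlam hxi).2 ⟨weyl_apply_mem hxi hβ, by simpa using h.symm⟩
  · obtain ⟨hγ, h⟩ := (mem_PsiP_wAct_iff hlam hxi).1 hγ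
    exact (mem_PsiP_wAct_iff hmu hx).2 ⟨weyl_apply_mem hx hγ, by simpa using h.symm⟩

lemma jc_dual (hlam : S.IsDominantIntegral lam) (hmu : S.IsDominantIntegral mu)
    (hx : x ∈ weyl (S.Φ : Set V)) (hy : y ∈ weyl (S.Φ : Set V))
    (hreg : IsRegularOn (singSet S mu) (wAct y lam)) :
    jc S (singSet S mu) (S.Φ : Set V) (wAct x lam) (wAct y lam) =
      (-1 : ℤ) ^ (len S x + len S y + 1) *
        jc S (singSet S lam) (S.Φ : Set V) (wAct x⁻¹ mu) (wAct y⁻¹ mu) := by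
  rw [jc_eq_finsum_PsiP, jc_eq_finsum_PsiP, mul_finsum_mem]
  refine finsum_mem_eq_of_bijOn _ (bijOn_PsiP hlam hmu hx) fun β hβ => ?_
  have hβΦ : β ∈ S.Φ := hβ.1.1
  have hs : reflV β ∈ weyl (S.Φ : Set V) := reflV_mem_weyl hβΦ
  have hsource : sRefl β (wAct x lam) = wAct (reflV β * x) lam := by
    rw [sRefl_eq_wAct, wAct_mul]
  have htarget : sRefl (x⁻¹ β) (wAct x⁻¹ mu) = wAct (reflV β * x)⁻¹ mu := by
    rw [sRefl_eq_wAct, ← wAct_mul, reflV_weyl_apply (inv_mem hx), inv_inv,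
      mul_inv_cancel_right, mul_inv_rev, reflV_inv]
  have hsign : S.weylSign y * S.weylSign (reflV β * x) = (-1) ^ (len S x + len S y + 1) := by
    rw [weylSign_mul hs hx, weylSign_reflV hβΦ, weylSign, weylSign]
    ring
  rw [hsource, htarget, sgnW_dual hlam hmu (mul_mem hs hx) hy hreg, hsign]

end Duality

end RootSys

theorem statement_9_general (S : RootSys V) {lam mu : HStar V}
    (hlam : S.IsDominantIntegral lam) (hmu : S.IsDominantIntegral mu) {x y : V ≃ₗ[ℝ] V}
    (hx : x ∈ weyl (S.Φ : Set V)) (hy : y ∈ weyl (S.Φ : Set V))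
    (hxreg : IsRegularOn (singSet S mu) (wAct x lam))
    (hyreg : IsRegularOn (singSet S mu) (wAct y lam)) :
    jcSym S (singSet S mu) (S.Φ : Set V) (wAct x lam) (wAct y lam) =
      (-1 : ℤ) ^ (len S x + len S y + 1) *
        jcSym S (singSet S lam) (S.Φ : Set V) (wAct x⁻¹ mu) (wAct y⁻¹ mu) := by
  rw [jcSym, jcSym, mul_add, RootSys.jc_dual hlam hmu hx hy hyreg,
    RootSys.jc_dual hlam hmu hy hx hxreg, add_comm (len S y)]

/-- Lemma 4.10 (Dual invariance): let `λ`, `μ` be dominant integral weights with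
`Φ_λ = Φ_J` and `Φ_μ = Φ_I`.  Then for all `x, y ∈ ᴵWᴶ`,
`c̃(xλ, yλ, Φ_I, Φ) = (-1)^{ℓ(x)+ℓ(y)+1} c̃(x⁻¹μ, y⁻¹μ, Φ_J, Φ)`. -/
theorem statement_9 {V : Type*} [NormedAddCommGroup V] [InnerProductSpace ℝ V]
    [FiniteDimensional ℝ V]
    (S : RootSys V) (I J : Finset V) (hI : I ⊆ S.Δ) (hJ : J ⊆ S.Δ)
    (lam mu : HStar V)
    (hlamdom : ∀ α ∈ S.Δ, ∃ n : ℤ, 0 ≤ n ∧ lam (coroot α) = (n : ℂ))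
    (hmudom : ∀ α ∈ S.Δ, ∃ n : ℤ, 0 ≤ n ∧ mu (coroot α) = (n : ℂ))
    (hlamJ : singSet S lam = PhiI S J)
    (hmuI : singSet S mu = PhiI S I)
    (x y : V ≃ₗ[ℝ] V) (hx : x ∈ doubleCoset S I J) (hy : y ∈ doubleCoset S I J) :
    jcSym S (PhiI S I) (S.Φ : Set V) (wAct x lam) (wAct y lam) =
      (-1 : ℤ) ^ (len S x + len S y + 1) *
        jcSym S (PhiI S J) (S.Φ : Set V) (wAct x⁻¹ mu) (wAct y⁻¹ mu) := by
  rw [← hlamJ, ← hmuI]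
  exact statement_9_general S hlamdom hmudom hx.1 hy.1
    (hmuI ▸ RootSys.isRegularOn_of_mem_doubleCoset hlamJ hx)
    (hmuI ▸ RootSys.isRegularOn_of_mem_doubleCoset hlamJ hy)

end JantzenGVM
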